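/- Highest-weight-vector monomials in divided powers of f₀ and f₁: (1) in W₀, for all m ≥ 1, f₁^{(2m)} f₀^{(2m−1)} f₁^{(2m−2)} ⋯ f₁^{(2)} f₀^{(1)} (1 ⊗ e^{0·α}) = (−1)^m q^{3m²} e^{−mα}, and for all m ≥ 0, f₀^{(2m+1)} f₁^{(2m)} f₀^{(2m−1)} ⋯ f₁^{(2)} f₀^{(1)} (1 ⊗ e^{0·α}) = q^{(m+1)(m+2)} e^{(m+1)α}; (2) in W₁, for all m ≥ 1, f₀^{(2m)} f₁^{(2m−1)} f₀^{(2m−2)} ⋯ f₀^{(2)} f₁^{(1)} (1 ⊗ e^{0·α}e^{α/2}) = (−1)^m q^{m(m+2)} e^{mα}e^{α/2}, and for all m ≥ 0, f₁^{(2m+1)} f₀^{(2m)} f₁^{(2m−1)} ⋯ f₀^{(2)} f₁^{(1)} (1 ⊗ e^{0·α}e^{α/2}) = q^{3m(m+1)} e^{−(m+1)α}e^{α/2}. (In each product the divided-power exponents decrease by 1 at each step and the operators f₀, f₁ alternate.) -/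

import Mathlib

/-!
The chains reduce to two one-step formulas: `f₁^{(r)} e^{Mα} = (-q)^{r(r-1)/2} e^{(M-r)α}` if
`2M + i = r`, and `f₀^{(r)} e^{Mα} = q^{2r} (-q⁻¹)^{r(r-1)/2} e^{(M+r)α}` if `2M + i = 1 - r`.

Both come from an exact formula for all iterates. Let `H_n` be the coefficients of the creation
half of the current, with `H_n = 0` for `n < 0`, and let `t = q²` for `X⁻`, `t = q⁻²` for `X⁺`. If
the first application to `e^{Mα}` produces `H_b`, then up to powers of `q` coming from `q^∂` the
`k`-th iterate is `∏_{l<k} (1 + t + ⋯ + t^l)` times the Hankel determinant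
`det (H_{b+2-2k+i+j})_{0 ≤ i,j < k}`. For `k = r = b + 1` the Hankel matrix is anti-triangular with
ones on the antidiagonal, so the determinant is a sign.

The inductive step has three ingredients.

* By the canonical commutation relations, the annihilation half of a current is a Taylor shift, the
  algebra homomorphism `T : p_n ↦ p_n + d_n uⁿ` into `Λ_F[u]`.
* The creation half is an eigenfamily of the operators `i ∂/∂p_i`, which lower its index by `i`;
  hence `T H_n = H_n - (1 + t) u H_{n-1} + t u² H_{n-2}`, with the coefficients of
  `(1 - u)(1 - t u)`, the exponential of the contraction of the two halves.
* Consequently `T` of the `k × k` Hankel determinant is a minor of `P K Qᵀ`, where `K` is the next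
  Hankel matrix and `P`, `Q` are unipotent bidiagonal, so it equals `∑ (tu)^s adj(K)_{s,p} u^p`.
  The creation half replaces `u^{p+s}` by the entry `K_{p,s}`, and the sum collapses to
  `∑_s t^s (adj(K) K)_{s,s} = (1 + t + ⋯ + t^k) det K`.
-/

open MvPolynomial

noncomputable section

/-- The base field `F = ℚ(q)`. -/
abbrev Fq : Type := RatFunc ℚ

/-- The indeterminate `q ∈ ℚ(q)`. -/
def qq : Fq := RatFunc.X

/-- `Λ_F = F[p₁,p₂,…]`, with the variable `X n` (for `n : ℕ+`) the power sum `p_n`. -/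
abbrev LamF : Type := MvPolynomial ℕ+ Fq

/-- The power sum `p_n`. -/
def ppF (n : ℕ+) : LamF := X n

/-- The family `g` with generating function `∑_k g_k t^k = exp (∑_{n≥1} c n · p_n tⁿ/n)`,
characterized by `g 0 = 1` and the recursion obtained by differentiating:
`(k+1) · g (k+1) = ∑_{i=0}^{k} c (i+1) · p_{i+1} · g (k−i)`. -/
def genFamF (c : ℕ → Fq) : ℕ → LamF
  | 0 => 1
  | (k+1) => (((k : Fq) + 1)⁻¹) •
      ∑ i ∈ Finset.range (k+1), c (i+1) • (ppF ⟨i+1, Nat.succ_pos i⟩ * genFamF c (k - i))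
  decreasing_by exact Nat.lt_succ_of_le (Nat.sub_le k i)

/-- The complete homogeneous symmetric function `h_k`. -/
def hhF : ℕ → LamF := genFamF fun _ => 1

/-- The elementary symmetric function `e_k`. -/
def eeF : ℕ → LamF := genFamF fun n => (-1)^(n+1)

/-- `h` indexed by `ℤ` (zero in negative degrees). -/
def hZF (n : ℤ) : LamF := if 0 ≤ n then hhF n.toNat else 0

/-- `e` indexed by `ℤ` (zero in negative degrees). -/
def eZF (n : ℤ) : LamF := if 0 ≤ n then eeF n.toNat else 0

/-- The creation coefficients of `X⁺(z)`:
`exp (∑ ((1+q^{2n})q^{−n}/n)·p_n·zⁿ) = ∑_k HpF k · z^k`. -/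
def HpF : ℕ → LamF := genFamF fun n => (1 + qq ^ (2*n)) * (qq⁻¹) ^ n

/-- `HpF` indexed by `ℤ`. -/
def HZp (n : ℤ) : LamF := if 0 ≤ n then HpF n.toNat else 0

/-- The annihilation avatars for `X⁺(z)`: since
`(1+q^{2n})q^{−n}/n · a_n = q^{−n}·∂/∂p_n`, the coefficient of `z^{−j}` in
`exp (−∑ ((1+q^{2n})q^{−n}/n)·a_n·z^{−n})` is `ApF j` with `p_i ↦ i·∂/∂p_i`
substituted, where `∑_k ApF k t^k = exp (−∑ q^{−n} p_n tⁿ/n)`. -/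
def ApF : ℕ → LamF := genFamF fun n => -((qq⁻¹) ^ n)

/-- The creation coefficients of `X⁻(z)`:
`exp (−∑ ((1+q^{2n})/n)·p_n·zⁿ) = ∑_k HmF k · z^k`. -/
def HmF : ℕ → LamF := genFamF fun n => -(1 + qq ^ (2*n))

/-- `HmF` indexed by `ℤ`. -/
def HZm (n : ℤ) : LamF := if 0 ≤ n then HmF n.toNat else 0

/-- The differential operator `∏_i (i·∂/∂p_i)^(α i)`. -/
def monOpF (α : ℕ+ →₀ ℕ) : Module.End Fq LamF :=
  ((α.support.sort (· ≤ ·)).map fun (i : ℕ+) =>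
    (((i : ℕ) : Fq) • (pderiv i).toLinearMap) ^ (α i)).prod

/-- `f(∂) P`: substitute `p_i ↦ i·∂/∂p_i` in `f` and apply to `P`. -/
def DopF (f : LamF) (P : LamF) : LamF := ∑ α ∈ f.support, f.coeff α • monOpF α P

/-- Bound for the weighted degree of `P` (weight of `p_i` is `i`). -/
def wboundF (P : LamF) : ℕ := P.support.sup fun α => α.sum fun i k => (i : ℕ) * k

/-- The level-one Fock space `W_i = Λ_F ⊗ F[ℤα]e^{iα/2}`, realized as `ℤ →₀ Λ_F`;
`Finsupp.single m P` represents `P·e^{mα}e^{iα/2}`. -/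
abbrev W : Type := ℤ →₀ LamF

/-- The Drinfeld current component `X_n^+` on `W_i` (the parameter `i ∈ {0,1}` enters
through `z^∂ e^{mα}e^{iα/2} = z^{2m+i} e^{mα}e^{iα/2}`): the coefficient of `z^{−n−1}` in
`X⁺(z) = exp(∑((1+q^{2n})q^{−n}/n)a_{−n}zⁿ)·exp(−∑((1+q^{2n})q^{−n}/n)a_n z^{−n})·e^α z^∂`,
i.e. `X_n^+(P·e^{mα}) = ∑_j HpF_{j−n−1−2m−i} · (ApF j)(∂) P · e^{(m+1)α}`
(only the finitely many `j ≤ wboundF P` contribute). -/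
def Xp (i n : ℤ) (w : W) : W :=
  w.sum fun m P => Finsupp.single (m+1)
    (∑ j ∈ Finset.range (wboundF P + 1),
      HZp ((j : ℤ) - n - 1 - 2*m - i) * DopF (ApF j) P)

/-- The Drinfeld current component `X_n^-` on `W_i`: the coefficient of `z^{−n−1}` in
`X⁻(z) = exp(−∑((1+q^{2n})/n)a_{−n}zⁿ)·exp(∑((1+q^{2n})/n)a_n z^{−n})·e^{−α} z^{−∂}`,
i.e. `X_n^-(P·e^{mα}) = ∑_j HmF_{j+2m+i−n−1} · h_j(∂) P · e^{(m−1)α}`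
(here `(1+q^{2n})/n · a_n = ∂/∂p_n`, whose generating family is `h`). -/
def Xm (i n : ℤ) (w : W) : W :=
  w.sum fun m P => Finsupp.single (m-1)
    (∑ j ∈ Finset.range (wboundF P + 1),
      HZm ((j : ℤ) + 2*m + i - n - 1) * DopF (hhF j) P)

/-- The `q`-factorial `[r]! = ∏_{k=1}^r (q^k − q^{−k})/(q − q^{−1})`. -/
def qfact (r : ℕ) : Fq := ∏ k ∈ Finset.range r, (qq ^ (k+1) - (qq⁻¹) ^ (k+1)) / (qq - qq⁻¹)

/-- The divided power `x^{(r)} = x^r / [r]!` of an operator on `W`. -/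
def divpow (f : W → W) (r : ℕ) (w : W) : W := (qfact r)⁻¹ • (f^[r] w)

/-- Schur function of an integer tuple: `s_ρ = det (h_{ρ_i − i + j})`. -/
def schurF {l : ℕ} (ρ : Fin l → ℤ) : LamF :=
  (Matrix.of fun i j : Fin l => hZF (ρ i - (i.1 : ℤ) + (j.1 : ℤ))).det

/-- Dual Schur function of an integer tuple: `s_{ρ'} = det (e_{ρ_i − i + j})`. -/
def schurEF {l : ℕ} (ρ : Fin l → ℤ) : LamF :=
  (Matrix.of fun i j : Fin l => eZF (ρ i - (i.1 : ℤ) + (j.1 : ℤ))).det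

/-- `q^{±∂}`: `q^{ε∂}(P·e^{mα}e^{iα/2}) = q^{ε(2m+i)}·P·e^{mα}e^{iα/2}`. -/
def qd (i ε : ℤ) (w : W) : W := w.sum fun m P => Finsupp.single m (qq ^ (ε * (2*m + i)) • P)

/-- The Chevalley generator `e₁ = X₀⁺`. -/
def che1 (i : ℤ) : W → W := Xp i 0
/-- The Chevalley generator `f₁ = X₀⁻`. -/
def chf1 (i : ℤ) : W → W := Xm i 0
/-- The Chevalley generator `e₀ = X₁⁻ ∘ q^{−∂}`. -/
def che0 (i : ℤ) (w : W) : W := Xm i 1 (qd i (-1) w)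
/-- The Chevalley generator `f₀ = q^∂ ∘ X₋₁⁺`. -/
def chf0 (i : ℤ) (w : W) : W := qd i 1 (Xp i (-1) w)


/-- The alternating chain in `W₀`: `chainW0 k = f^{(k)} ⋯ f₁^{(2)} f₀^{(1)} (1 ⊗ e^{0·α})`,
where the divided-power exponents decrease by one at each step, the bottom operator is
`f₀^{(1)}`, and the operators alternate (`f₀` at odd steps, `f₁` at even steps). -/
def chainW0 : ℕ → W
  | 0 => Finsupp.single 0 (1 : LamF)
  | (k+1) => divpow (if 2 ∣ (k+1) then chf1 0 else chf0 0) (k+1) (chainW0 k)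

/-- The alternating chain in `W₁`: `chainW1 k = f^{(k)} ⋯ f₀^{(2)} f₁^{(1)} (1 ⊗ e^{0·α}e^{α/2})`,
with bottom operator `f₁^{(1)}` and alternating `f₁` (odd steps) and `f₀` (even steps). -/
def chainW1 : ℕ → W
  | 0 => Finsupp.single 0 (1 : LamF)
  | (k+1) => divpow (if 2 ∣ (k+1) then chf0 1 else chf1 1) (k+1) (chainW1 k)

open scoped Matrix Polynomial

section Hankel

variable {R : Type*}

/-- The Hankel matrix of a sequence indexed by `ℤ`; `b` is the index of its top left entry. -/
def hankel (h : ℤ → R) (b : ℤ) (k : ℕ) : Matrix (Fin k) (Fin k) R :=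
  Matrix.of fun i j => h (b + i + j)

theorem hankel_apply (h : ℤ → R) (b : ℤ) (k : ℕ) (i j : Fin k) :
    hankel h b k i j = h (b + i + j) := rfl

variable [CommRing R]

theorem det_hankel_one_sub {h : ℤ → R} (h_zero : h 0 = 1) (h_neg : ∀ n < 0, h n = 0) (k : ℕ) :
    (hankel h (1 - k) k).det = (-1) ^ k.choose 2 := by
  induction k with
  | zero => simp
  | succ k ih =>
    have hminor : (hankel h (1 - (k + 1 : ℕ)) (k + 1)).submatrix Fin.succ Fin.castSucc =
        hankel h (1 - k) k := by
      ext i j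
      simp only [Matrix.submatrix_apply, hankel_apply, Fin.val_succ, Fin.val_castSucc]
      congr 1
      push_cast
      ring
    rw [Matrix.det_succ_row_zero, Finset.sum_eq_single (Fin.last k)]
    · rw [Fin.succAbove_last, hminor, ih, hankel_apply, Nat.choose_succ_left _ _ two_pos]
      simp [h_zero, pow_add]
    · intro j _ hj
      have hlt : (j : ℕ) < k := Fin.val_lt_last hj
      rw [hankel_apply, h_neg _ (by simp; omega)]
      simp
    · simp

/-- The matrix `1 - u N`, where `N` has ones just below the diagonal and zeros elsewhere. -/
def bidiagonal (u : R) (k : ℕ) : Matrix (Fin (k + 1)) (Fin (k + 1)) R :=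
  Matrix.of <| Fin.cons (Pi.single 0 1) fun i ↦ Pi.single i.succ 1 - u • Pi.single i.castSucc 1

theorem bidiagonal_mulVec_zero (u : R) {k : ℕ} (v : Fin (k + 1) → R) :
    (bidiagonal u k *ᵥ v) 0 = v 0 := by
  simp [bidiagonal, Matrix.mulVec]

theorem bidiagonal_mulVec_succ (u : R) {k : ℕ} (v : Fin (k + 1) → R) (i : Fin k) :
    (bidiagonal u k *ᵥ v) i.succ = v i.succ - u * v i.castSucc := by
  change (Pi.single i.succ 1 - u • Pi.single i.castSucc 1) ⬝ᵥ v = _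
  simp [sub_dotProduct]

theorem det_bidiagonal (u : R) (k : ℕ) : (bidiagonal u k).det = 1 := by
  rw [← Matrix.det_one (n := Fin (k + 1)), eq_comm]
  refine Matrix.det_eq_of_forall_row_eq_smul_add_pred (fun _ ↦ u) (fun j ↦ ?_) fun i j ↦ ?_
  · simp [bidiagonal, Matrix.one_apply, Pi.single_apply, eq_comm]
  · simp [bidiagonal, Matrix.one_apply, Pi.single_apply, eq_comm]

theorem adjugate_bidiagonal_apply_zero (u : R) (k : ℕ) (i : Fin (k + 1)) :
    (bidiagonal u k).adjugate i 0 = u ^ (i : ℕ) := by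
  have hpow : bidiagonal u k *ᵥ (fun i ↦ u ^ (i : ℕ)) = Pi.single 0 1 := by
    ext i
    cases i using Fin.cases with
    | zero => simp [bidiagonal_mulVec_zero]
    | succ i => simp [bidiagonal_mulVec_succ, pow_succ']
  simpa [det_bidiagonal, Matrix.adjugate_mul] using
    (congr_fun (congr_arg ((bidiagonal u k).adjugate *ᵥ ·) hpow) i).symm

theorem bidiagonal_mul_mul_transpose_succ_succ (u v : R) {k : ℕ}
    (K : Matrix (Fin (k + 1)) (Fin (k + 1)) R) (i j : Fin k) :
    (bidiagonal u k * K * (bidiagonal v k)ᵀ) i.succ j.succ =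
      K i.succ j.succ - u * K i.castSucc j.succ -
        v * (K i.succ j.castSucc - u * K i.castSucc j.castSucc) := by
  have hrow (x : Fin (k + 1)) :
      (bidiagonal u k * K) i.succ x = K i.succ x - u * K i.castSucc x :=
    bidiagonal_mulVec_succ u (fun y ↦ K y x) i
  rw [← Matrix.transpose_apply (_ * _), Matrix.transpose_mul, Matrix.transpose_transpose]
  refine (bidiagonal_mulVec_succ v (fun x ↦ (bidiagonal u k * K) i.succ x) j).trans ?_
  rw [hrow, hrow]

/-- The left-hand side is the `(0, 0)` minor of `bidiagonal u k * K * (bidiagonal v k)ᵀ`, and the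
adjugate is multiplicative. -/
theorem det_second_difference (u v : R) {k : ℕ} (K : Matrix (Fin (k + 1)) (Fin (k + 1)) R) :
    (Matrix.of fun i j : Fin k ↦ K i.succ j.succ - u * K i.castSucc j.succ -
        v * (K i.succ j.castSucc - u * K i.castSucc j.castSucc)).det =
      ∑ p : Fin (k + 1), ∑ s : Fin (k + 1), v ^ (s : ℕ) * K.adjugate s p * u ^ (p : ℕ) := by
  have hminor : (bidiagonal u k * K * (bidiagonal v k)ᵀ).adjugate 0 0 = Matrix.det
      (Matrix.of fun i j : Fin k ↦ K i.succ j.succ - u * K i.castSucc j.succ -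
        v * (K i.succ j.castSucc - u * K i.castSucc j.castSucc)) := by
    simp only [Matrix.adjugate_fin_succ_eq_det_submatrix, Fin.val_zero, add_zero, pow_zero,
      one_mul, Fin.succAbove_zero]
    congr 1
    ext i j
    exact bidiagonal_mul_mul_transpose_succ_succ u v K i j
  simp_rw [← hminor, Matrix.adjugate_mul_distrib, ← Matrix.mul_assoc, Matrix.mul_apply,
    Finset.sum_mul, ← Matrix.adjugate_transpose, Matrix.transpose_apply,
    adjugate_bidiagonal_apply_zero]

end Hankel

section VertexOperator

variable {F R : Type*} [CommRing F] [CommRing R] [Algebra F R]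

/-- A component of a current in normal order: the annihilation half is an algebra homomorphism
`T : R → R[u]`, and the creation half with coefficients `h` then replaces `u ^ j` by `h (b + j)`. -/
def vertexOp (T : R →ₐ[F] R[X]) (h : ℤ → R) (b : ℤ) : R →ₗ[F] R :=
  (Polynomial.lsum fun j : ℕ ↦ LinearMap.mulLeft F (h (b + j))) ∘ₗ T.toLinearMap

theorem vertexOp_apply (T : R →ₐ[F] R[X]) (h : ℤ → R) (b : ℤ) (P : R) :
    vertexOp T h b P = (T P).sum fun j a ↦ h (b + j) * a := rfl

theorem map_det_hankel {T : R →ₐ[F] R[X]} {h : ℤ → R} {t : F}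
    (hT : ∀ n, T (h n) = .C (h n) - (1 + t) • (.X * .C (h (n - 1))) +
      t • (.X ^ 2 * .C (h (n - 2)))) (b : ℤ) (k : ℕ) :
    T (hankel h (b + 2) k).det = ∑ p : Fin (k + 1), ∑ s : Fin (k + 1),
      .monomial (p + s) (t ^ (s : ℕ) • (hankel h b (k + 1)).adjugate s p) := by
  have hmap : T.mapMatrix (hankel h (b + 2) k) = Matrix.of fun i j : Fin k ↦
      (Polynomial.C.mapMatrix (hankel h b (k + 1))) i.succ j.succ -
        .X * (Polynomial.C.mapMatrix (hankel h b (k + 1))) i.castSucc j.succ -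
        t • .X * ((Polynomial.C.mapMatrix (hankel h b (k + 1))) i.succ j.castSucc -
          .X * (Polynomial.C.mapMatrix (hankel h b (k + 1))) i.castSucc j.castSucc) := by
    ext1 i j
    have h₀ : b + 2 + (i : ℤ) + j = b + (i + 1 : ℕ) + (j + 1 : ℕ) := by push_cast; ring
    have h₁ : b + (i : ℤ) + (j + 1 : ℕ) = b + (i + 1 : ℕ) + (j + 1 : ℕ) - 1 := by push_cast; ring
    have h₁' : b + (i + 1 : ℕ) + (j : ℤ) = b + (i + 1 : ℕ) + (j + 1 : ℕ) - 1 := by push_cast; ring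
    have h₂ : b + (i : ℤ) + (j : ℤ) = b + (i + 1 : ℕ) + (j + 1 : ℕ) - 2 := by push_cast; ring
    simp only [AlgHom.mapMatrix_apply, RingHom.mapMatrix_apply, Matrix.map_apply, Matrix.of_apply,
      hankel_apply, hT, Fin.val_succ, Fin.val_castSucc, h₀, h₁, h₁', h₂]
    simp only [Algebra.smul_def, map_add, map_one]
    ring
  rw [AlgHom.map_det, hmap, det_second_difference, ← RingHom.map_adjugate]
  refine Finset.sum_congr rfl fun p _ ↦ Finset.sum_congr rfl fun s _ ↦ ?_
  rw [RingHom.mapMatrix_apply, Matrix.map_apply, ← Polynomial.C_mul_X_pow_eq_monomial, smul_pow,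
    pow_add, ← Polynomial.smul_C]
  simp only [Algebra.smul_def]
  ring

/-- The double sum produced by `map_det_hankel` collapses through `adj(K) * K = det K`, the creation
half supplying the entry `K p s = h (b + p + s)`. -/
theorem vertexOp_det_hankel {T : R →ₐ[F] R[X]} {h : ℤ → R} {t : F}
    (hT : ∀ n, T (h n) = .C (h n) - (1 + t) • (.X * .C (h (n - 1))) +
      t • (.X ^ 2 * .C (h (n - 2)))) (b : ℤ) (k : ℕ) :
    vertexOp T h b (hankel h (b + 2) k).det =
      (∑ s ∈ Finset.range (k + 1), t ^ s) • (hankel h b (k + 1)).det := by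
  set K := hankel h b (k + 1) with hK
  have hdiag (s : Fin (k + 1)) : ∑ p, K.adjugate s p * K p s = K.det := by
    simpa [Matrix.mul_apply] using congr_fun₂ (Matrix.adjugate_mul K) s s
  rw [vertexOp, LinearMap.comp_apply, AlgHom.toLinearMap_apply, map_det_hankel hT, ← hK]
  simp_rw [map_sum]
  rw [Finset.sum_comm, ← Fin.sum_univ_eq_sum_range (fun s ↦ t ^ s), Finset.sum_smul]
  refine Finset.sum_congr rfl fun s _ ↦ ?_
  rw [← hdiag s, Finset.smul_sum]
  refine Finset.sum_congr rfl fun p _ ↦ ?_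
  rw [Polynomial.lsum_apply, Polynomial.sum_monomial_index _ _ (by simp), LinearMap.mulLeft_apply,
    hK, hankel_apply, mul_smul_comm, mul_comm, Nat.cast_add, ← add_assoc]

end VertexOperator

section EulerOperators

variable {K : Type*} [CommRing K]

/-- The derivation `i ∂/∂p_i`. -/
def eulerOp (i : ℕ+) : Derivation K (MvPolynomial ℕ+ K) (MvPolynomial ℕ+ K) :=
  (i : K) • pderiv i

theorem eulerOp_X (i j : ℕ+) :
    eulerOp i (X j : MvPolynomial ℕ+ K) = if i = j then C (j : K) else 0 := by
  rw [eulerOp, Derivation.smul_apply, pderiv_X, Pi.single_apply, smul_ite, smul_zero,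
    smul_eq_C_mul, mul_one]
  by_cases h : i = j
  · simp [h]
  · simp [h, Ne.symm h]

theorem eulerOp_X_mul (i j : ℕ+) (P : MvPolynomial ℕ+ K) :
    eulerOp i (X j * P) = X j * eulerOp i P + if i = j then (j : K) • P else 0 := by
  rw [Derivation.leibniz, eulerOp_X, smul_eq_mul, smul_eq_mul, mul_ite, mul_zero, mul_comm P,
    ← smul_eq_C_mul]

theorem eulerOp_comm (i j : ℕ+) (P : MvPolynomial ℕ+ K) :
    eulerOp i (eulerOp j P) = eulerOp j (eulerOp i P) := by
  have hbracket : ⁅(eulerOp i : Derivation K (MvPolynomial ℕ+ K) (MvPolynomial ℕ+ K)),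
      (eulerOp j : Derivation K (MvPolynomial ℕ+ K) (MvPolynomial ℕ+ K))⁆ = 0 :=
    MvPolynomial.derivation_ext fun k ↦ by
      simp [Derivation.commutator_apply, eulerOp_X, apply_ite]
  exact sub_eq_zero.mp (by rw [← Derivation.commutator_apply, hbracket, Derivation.zero_apply])

instance isMulCommutative_adjoin_eulerOp : IsMulCommutative (Algebra.adjoin K
    (Set.range fun i ↦ (eulerOp i : Derivation K (MvPolynomial ℕ+ K) _).toLinearMap) :
      Subalgebra K (Module.End K (MvPolynomial ℕ+ K))) :=
  Algebra.isMulCommutative_adjoin K <| by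
    rintro _ ⟨i, rfl⟩ _ ⟨j, rfl⟩
    exact LinearMap.ext (eulerOp_comm i j)

open scoped IsMulCommutative in
/-- The substitution `p_i ↦ i ∂/∂p_i`. Since `aeval` needs a commutative target, it is defined
through the commutative subalgebra generated by the operators `i ∂/∂p_i`. -/
def opHom : MvPolynomial ℕ+ K →ₐ[K] Module.End K (MvPolynomial ℕ+ K) :=
  (Algebra.adjoin K (Set.range fun i ↦ (eulerOp i).toLinearMap)).val.comp
    (aeval fun i ↦ ⟨(eulerOp i).toLinearMap, Algebra.subset_adjoin ⟨i, rfl⟩⟩)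

theorem opHom_X (i : ℕ+) (P : MvPolynomial ℕ+ K) : opHom (X i) P = eulerOp i P := by
  simp [opHom]

theorem opHom_mul (f g P : MvPolynomial ℕ+ K) : opHom (f * g) P = opHom f (opHom g P) := by
  rw [map_mul, Module.End.mul_apply]

/-- The canonical commutation relation: `[f(∂), p_n]` is the derivative of `f` applied to `∂`. -/
theorem opHom_X_mul (f : MvPolynomial ℕ+ K) (n : ℕ+) (P : MvPolynomial ℕ+ K) :
    opHom f (X n * P) = X n * opHom f P + opHom (eulerOp n f) P := by
  induction f using MvPolynomial.induction_on generalizing P with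
  | C a => simp [← algebraMap_eq]
  | add f g hf hg => simp only [map_add, LinearMap.add_apply, hf, hg]; ring
  | mul_X f i ih =>
    have hX : opHom (f * eulerOp n (X i)) P = opHom f (eulerOp i (X n) * P) := by
      rw [eulerOp_X, eulerOp_X]
      split_ifs with h h' h'
      · rw [h, opHom_mul, ← algebraMap_eq, AlgHom.commutes, Module.algebraMap_end_apply,
          Algebra.smul_def]
      · exact absurd h.symm h'
      · exact absurd h'.symm h
      · simp
    simp only [opHom_mul, opHom_X, Derivation.leibniz, smul_eq_mul, map_add, ih,
      LinearMap.add_apply, hX, mul_comm (X i), mul_comm P]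
    ring

/-- The algebra homomorphism `p_n ↦ p_n + d_n uⁿ`, that is the Taylor shift
`exp (∑ d_n uⁿ ∂/∂p_n)`. -/
def shiftHom (d : ℕ → K) : MvPolynomial ℕ+ K →ₐ[K] (MvPolynomial ℕ+ K)[X] :=
  aeval fun n ↦ .C (X n) + d n • .X ^ (n : ℕ)

theorem shiftHom_C (d : ℕ → K) (a : K) : shiftHom d (C a) = .C (C a) := aeval_C ..

theorem coeff_shiftHom_X_mul (d : ℕ → K) (P : MvPolynomial ℕ+ K) (n : ℕ+) (k : ℕ) :
    (shiftHom d (X n * P)).coeff k = X n * (shiftHom d P).coeff k +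
      if n ≤ k then d n • (shiftHom d P).coeff (k - n) else 0 := by
  rw [map_mul, shiftHom, aeval_X, add_mul, smul_mul_assoc, Polynomial.coeff_add,
    Polynomial.coeff_C_mul, Polynomial.coeff_smul, Polynomial.coeff_X_pow_mul', smul_ite, smul_zero]

end EulerOperators

section GeneratingFamilies

/-- `genFamF c` indexed by `ℤ` (zero in negative degrees). -/
def genZ (c : ℕ → Fq) (n : ℤ) : LamF := if 0 ≤ n then genFamF c n.toNat else 0

variable (c d : ℕ → Fq)

theorem genZ_natCast (n : ℕ) : genZ c n = genFamF c n := by simp [genZ]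

theorem genZ_zero : genZ c 0 = 1 := by simp [genZ, genFamF]

theorem genZ_of_neg {n : ℤ} (hn : n < 0) : genZ c n = 0 := if_neg hn.not_ge

theorem natCast_add_one_smul_genFamF (k : ℕ) : ((k : Fq) + 1) • genFamF c (k + 1) =
    ∑ i ∈ Finset.range (k + 1), c (i + 1) • (X (Nat.succPNat i) * genFamF c (k - i)) := by
  rw [genFamF, smul_inv_smul₀ (Nat.cast_add_one_ne_zero k)]
  rfl

theorem intCast_smul_genZ {n : ℤ} {N : ℕ} (hN : n ≤ N) : (n : Fq) • genZ c n =
    ∑ i ∈ Finset.range N, c (i + 1) • (X (Nat.succPNat i) * genZ c (n - (i + 1))) := by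
  rcases le_or_gt n 0 with hn | hn
  · rw [Finset.sum_eq_zero fun i _ ↦ by rw [genZ_of_neg c (by omega), mul_zero, smul_zero]]
    rcases hn.eq_or_lt with rfl | hn
    · simp
    · rw [genZ_of_neg c hn, smul_zero]
  · obtain ⟨k, rfl⟩ : ∃ k : ℕ, n = (k + 1 : ℕ) := ⟨(n - 1).toNat, by omega⟩
    rw [genZ_natCast, Int.cast_natCast, Nat.cast_add_one, natCast_add_one_smul_genFamF,
      ← Finset.sum_subset (Finset.range_subset_range.mpr (Nat.cast_le.mp hN))]
    · refine Finset.sum_congr rfl fun i hi ↦ ?_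
      rw [← genZ_natCast, Nat.cast_sub (Finset.mem_range_succ_iff.mp hi), Nat.cast_add_one,
        add_sub_add_right_eq_sub]
    · intro i _ hi
      rw [Finset.mem_range, not_lt] at hi
      rw [genZ_of_neg c (by omega), mul_zero, smul_zero]

theorem eulerOp_genZ (i : ℕ+) (n : ℤ) : eulerOp i (genZ c n) = c i • genZ c (n - i) := by
  have hi : (0 : ℤ) < i := by exact_mod_cast i.pos
  induction n using Int.strongRec (m := 1) with
  | lt n hn =>
    rw [genZ_of_neg c (by omega : n - i < 0), smul_zero]
    rcases (Int.le_of_lt_add_one hn : n ≤ 0).eq_or_lt with rfl | hn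
    · rw [genZ_zero, Derivation.map_one_eq_zero]
    · rw [genZ_of_neg c hn, map_zero]
  | ge n hn ih =>
    have hn₀ : (n : Fq) ≠ 0 := Int.cast_ne_zero.mpr (by omega)
    obtain ⟨N, hN⟩ : ∃ N : ℕ, n ≤ N ∧ i ≤ N := ⟨n.toNat + i, by omega, by omega⟩
    refine smul_right_injective LamF hn₀ ?_
    calc (n : Fq) • eulerOp i (genZ c n)
        = ∑ k ∈ Finset.range N, (c i • c (k + 1) •
              (X (Nat.succPNat k) * genZ c (n - i - (k + 1))) +
            if i = Nat.succPNat k then (c i * i) • genZ c (n - i) else 0) := by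
          rw [← Derivation.map_smul, intCast_smul_genZ c hN.1, map_sum]
          refine Finset.sum_congr rfl fun k _ ↦ ?_
          rw [Derivation.map_smul, eulerOp_X_mul, ih _ (by omega), mul_smul_comm, smul_add,
            smul_comm, sub_right_comm]
          congr 1
          split_ifs with h
          · simp [h, smul_smul]
          · rw [smul_zero]
      _ = c i • ((n - i : ℤ) : Fq) • genZ c (n - i) + (c i * i) • genZ c (n - i) := by
          rw [Finset.sum_add_distrib, intCast_smul_genZ c (by omega : n - i ≤ N), Finset.smul_sum,
            ← PNat.succPNat_natPred i]
          have hmem : i.natPred ∈ Finset.range N :=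
            Finset.mem_range.mpr (by have := i.natPred_add_one; omega)
          simp only [Nat.succPNat_inj, Finset.sum_ite_eq, hmem, if_true]
      _ = (n : Fq) • c i • genZ c (n - i) := by
          simp only [smul_smul, ← add_smul]
          congr 1
          push_cast
          ring

theorem opHom_genFamF_C_succ (k : ℕ) (a : Fq) : opHom (genFamF d (k + 1)) (C a) = 0 := by
  refine (smul_eq_zero_iff_right (Nat.cast_add_one_ne_zero (R := Fq) k)).mp ?_
  rw [← LinearMap.smul_apply, ← map_smul, natCast_add_one_smul_genFamF, map_sum,
    LinearMap.sum_apply]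
  refine Finset.sum_eq_zero fun i _ ↦ ?_
  rw [map_smul, LinearMap.smul_apply, mul_comm, opHom_mul, opHom_X, ← algebraMap_eq,
    Derivation.map_algebraMap, map_zero, smul_zero]

theorem opHom_genFamF (k : ℕ) (P : LamF) :
    opHom (genFamF d k) P = (shiftHom d P).coeff k := by
  induction P using MvPolynomial.induction_on generalizing k with
  | C a =>
    rw [shiftHom_C]
    cases k with
    | zero => simp [genFamF]
    | succ k => rw [opHom_genFamF_C_succ, Polynomial.coeff_C_succ]
  | add P Q hP hQ => simp only [map_add, Polynomial.coeff_add, hP, hQ]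
  | mul_X P n ih =>
    rw [mul_comm, opHom_X_mul, coeff_shiftHom_X_mul, ih, ← genZ_natCast, eulerOp_genZ]
    congr 1
    split_ifs with h
    · rw [← Nat.cast_sub h, genZ_natCast, map_smul, LinearMap.smul_apply, ih]
    · rw [genZ_of_neg d (by omega), smul_zero, map_zero, LinearMap.zero_apply]

/-- The coefficients of `(1 - w)(1 - t w)`, the contraction factor of a creation half and an
annihilation half whose exponents contract to `-∑ (1 + t ^ n) w ^ n / n`. -/
def contractionCoeff (t : Fq) : ℕ → Fq
  | 0 => 1
  | 1 => -(1 + t)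
  | 2 => t
  | _ + 3 => 0

theorem natCast_add_one_mul_contractionCoeff (t : Fq) (k : ℕ) :
    (k + 1 : Fq) * contractionCoeff t (k + 1) =
      ∑ i ∈ Finset.range (k + 1), -(1 + t ^ (i + 1)) * contractionCoeff t (k - i) := by
  match k with
  | 0 => simp [contractionCoeff]
  | 1 =>
    simp only [Finset.sum_range_succ, Finset.sum_range_zero, contractionCoeff]
    push_cast
    ring
  | k + 2 =>
    have hhead : ∑ i ∈ Finset.range k, -(1 + t ^ (i + 1)) * contractionCoeff t (k + 2 - i) = 0 := by
      refine Finset.sum_eq_zero fun i hi ↦ ?_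
      obtain ⟨l, hl⟩ : ∃ l, k + 2 - i = l + 3 :=
        ⟨k - i - 1, by have := Finset.mem_range.mp hi; omega⟩
      rw [hl, contractionCoeff, mul_zero]
    rw [Finset.sum_range_succ, Finset.sum_range_succ, Finset.sum_range_succ, hhead,
      Nat.add_sub_cancel_left, Nat.sub_self, Nat.add_sub_add_left]
    simp only [Nat.reduceSub, contractionCoeff]
    ring

variable {c d}

theorem opHom_genFamF_genZ {t : Fq} (hcd : ∀ n, c (n + 1) * d (n + 1) = -(1 + t ^ (n + 1)))
    (j : ℕ) (n : ℤ) :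
    opHom (genFamF d j) (genZ c n) = contractionCoeff t j • genZ c (n - j) := by
  induction j using Nat.strong_induction_on with
  | _ j ih =>
    cases j with
    | zero => simp [genFamF, contractionCoeff]
    | succ k =>
      refine smul_right_injective LamF (Nat.cast_add_one_ne_zero (R := Fq) k) ?_
      simp only
      rw [← LinearMap.smul_apply, ← map_smul, natCast_add_one_smul_genFamF, map_sum,
        LinearMap.sum_apply, smul_smul, natCast_add_one_mul_contractionCoeff, Finset.sum_smul]
      refine Finset.sum_congr rfl fun i hi ↦ ?_
      have hik : i ≤ k := Finset.mem_range_succ_iff.mp hi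
      have hindex : n - (k - i : ℕ) - (Nat.succPNat i : ℕ) = n - (k + 1 : ℕ) := by
        rw [Nat.succPNat_coe]; omega
      rw [map_smul, LinearMap.smul_apply, opHom_mul, opHom_X, ih _ (by omega),
        Derivation.map_smul, eulerOp_genZ, hindex, Nat.succPNat_coe, ← hcd, smul_smul, smul_smul]
      congr 1
      ring

theorem shiftHom_genZ {t : Fq} (hcd : ∀ n, c (n + 1) * d (n + 1) = -(1 + t ^ (n + 1))) (n : ℤ) :
    shiftHom d (genZ c n) =
      .C (genZ c n) - (1 + t) • (.X * .C (genZ c (n - 1))) +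
        t • (.X ^ 2 * .C (genZ c (n - 2))) := by
  ext1 j
  rw [← opHom_genFamF, opHom_genFamF_genZ hcd]
  match j with
  | 0 => simp [contractionCoeff]
  | 1 => simp [contractionCoeff, -neg_add_rev, neg_smul]
  | 2 => simp [contractionCoeff]
  | j + 3 => simp [contractionCoeff]

end GeneratingFamilies

section Currents

theorem opHom_monomial (α : ℕ+ →₀ ℕ) : opHom (monomial α 1) = monOpF α := by
  have hprod : (monomial α (1 : Fq) : LamF) =
      ((α.support.sort (· ≤ ·)).map fun i ↦ (X i : LamF) ^ α i).prod := by
    rw [((Finset.sort_perm_toList α.support (· ≤ ·)).map _).prod_eq, Finset.prod_map_toList,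
      monomial_eq, C_1, one_mul]
    rfl
  rw [hprod, map_list_prod, List.map_map, monOpF]
  congr 2
  ext1 i
  rw [Function.comp_apply, map_pow, show opHom (X i) = _ from LinearMap.ext (opHom_X i)]
  rfl

theorem DopF_eq_opHom (f P : LamF) : DopF f P = opHom f P := by
  conv_rhs => rw [f.as_sum]
  rw [map_sum, LinearMap.sum_apply, DopF]
  refine Finset.sum_congr rfl fun α _ ↦ ?_
  rw [← opHom_monomial, ← LinearMap.smul_apply, ← map_smul, smul_monomial, smul_eq_mul, mul_one]

theorem natDegree_shiftHom_le (d : ℕ → Fq) (P : LamF) :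
    (shiftHom d P).natDegree ≤ wboundF P := by
  rw [shiftHom, aeval_def, eval₂_eq]
  refine Polynomial.natDegree_sum_le_of_forall_le _ _ fun α hα ↦ ?_
  refine le_trans ?_ (Finset.le_sup (f := fun α : ℕ+ →₀ ℕ ↦ α.sum fun i k ↦ (i : ℕ) * k) hα)
  refine (Polynomial.natDegree_C_mul_le (C (coeff α P)) _).trans ?_
  refine (Polynomial.natDegree_prod_le _ _).trans (Finset.sum_le_sum fun i _ ↦ ?_)
  refine Polynomial.natDegree_pow_le.trans ?_
  rw [mul_comm]
  refine Nat.mul_le_mul_right _ ?_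
  exact (Polynomial.natDegree_add_le _ _).trans
    (max_le (by simp)
    ((Polynomial.natDegree_smul_le _ _).trans (Polynomial.natDegree_X_pow_le _)))

theorem sum_DopF_genFamF (d : ℕ → Fq) (h : ℤ → LamF) (b : ℤ) (P : LamF) :
    ∑ j ∈ Finset.range (wboundF P + 1), h (b + j) * DopF (genFamF d j) P =
      vertexOp (shiftHom d) h b P := by
  rw [vertexOp_apply, Polynomial.sum_over_range' _ (by simp) (wboundF P + 1)
    (Nat.lt_succ_of_le (natDegree_shiftHom_le d P))]
  simp only [DopF_eq_opHom, opHom_genFamF]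

theorem HZp_eq_genZ : HZp = genZ fun n ↦ (1 + qq ^ (2 * n)) * qq⁻¹ ^ n := rfl

theorem HZm_eq_genZ : HZm = genZ fun n ↦ -(1 + qq ^ (2 * n)) := rfl

theorem Xm_single (i n m : ℤ) (P : LamF) : Xm i n (Finsupp.single m P) =
    Finsupp.single (m - 1) (vertexOp (shiftHom fun _ ↦ 1) HZm (2 * m + i - n - 1) P) := by
  rw [← sum_DopF_genFamF, Xm, Finsupp.sum_single_index (by simp [DopF])]
  congr 1
  refine Finset.sum_congr rfl fun j _ ↦ ?_
  rw [hhF]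
  congr 2
  ring

theorem Xp_single (i n m : ℤ) (P : LamF) : Xp i n (Finsupp.single m P) =
    Finsupp.single (m + 1)
      (vertexOp (shiftHom fun n ↦ -qq⁻¹ ^ n) HZp (-n - 1 - 2 * m - i) P) := by
  rw [← sum_DopF_genFamF, Xp, Finsupp.sum_single_index (by simp [DopF])]
  congr 1
  refine Finset.sum_congr rfl fun j _ ↦ ?_
  rw [ApF]
  congr 2
  ring

theorem qd_single (i ε m : ℤ) (P : LamF) :
    qd i ε (Finsupp.single m P) = Finsupp.single m (qq ^ (ε * (2 * m + i)) • P) := by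
  rw [qd, Finsupp.sum_single_index]
  simp

theorem chf1_single (i m : ℤ) (P : LamF) : chf1 i (Finsupp.single m P) =
    Finsupp.single (m - 1) (vertexOp (shiftHom fun _ ↦ 1) (genZ fun n ↦ -(1 + qq ^ (2 * n)))
      (2 * m + i - 1) P) := by
  rw [chf1, Xm_single, sub_zero, HZm_eq_genZ]

theorem chf0_single (i m : ℤ) (P : LamF) : chf0 i (Finsupp.single m P) =
    Finsupp.single (m + 1) (qq ^ (2 * (m + 1) + i) • vertexOp (shiftHom fun n ↦ -qq⁻¹ ^ n)
      (genZ fun n ↦ (1 + qq ^ (2 * n)) * qq⁻¹ ^ n) (-(2 * m) - i) P) := by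
  rw [chf0, Xp_single, qd_single, one_mul, neg_neg, sub_self, zero_sub, HZp_eq_genZ]

theorem iterate_single_one {c d : ℕ → Fq} {t : Fq}
    (hcd : ∀ n, c (n + 1) * d (n + 1) = -(1 + t ^ (n + 1))) {f : W → W} {M : ℕ → ℤ} {y : ℕ → Fq}
    {b : ℤ} (hf : ∀ (k : ℕ) P, f (Finsupp.single (M k) P) =
      Finsupp.single (M (k + 1)) (y k • vertexOp (shiftHom d) (genZ c) (b - 2 * k) P))
    (x : Fq) (k : ℕ) :
    f^[k] (x • Finsupp.single (M 0) 1) = Finsupp.single (M k)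
      ((x * ∏ l ∈ Finset.range k, y l * ∑ j ∈ Finset.range (l + 1), t ^ j) •
        (hankel (genZ c) (b + 2 - 2 * k) k).det) := by
  induction k with
  | zero => simp
  | succ k ih =>
    have hindex : b + 2 - 2 * (k : ℤ) = b - 2 * k + 2 := by ring
    have hindex' : b + 2 - 2 * ((k + 1 : ℕ) : ℤ) = b - 2 * k := by push_cast; ring
    rw [Function.iterate_succ_apply', ih, hf, hindex, map_smul,
      vertexOp_det_hankel (shiftHom_genZ hcd), hindex', Finset.prod_range_succ, smul_smul,
      smul_smul]
    congr 2
    ring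

end Currents

section QuantumIntegers

theorem prod_geom_sum_sq {K : Type*} [Field K] {s : K} (hs₀ : s ≠ 0) (hs₁ : s ^ 2 ≠ 1) (r : ℕ) :
    ∏ l ∈ Finset.range r, ∑ j ∈ Finset.range (l + 1), (s ^ 2) ^ j =
      s ^ r.choose 2 * ∏ l ∈ Finset.range r, (s ^ (l + 1) - s⁻¹ ^ (l + 1)) / (s - s⁻¹) := by
  have hgeom (l : ℕ) : ∑ j ∈ Finset.range (l + 1), (s ^ 2) ^ j =
      s ^ l * ((s ^ (l + 1) - s⁻¹ ^ (l + 1)) / (s - s⁻¹)) := by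
    have hsub : s - s⁻¹ = (s ^ 2 - 1) / s := by field_simp
    have hs₂ : s ^ 2 - 1 ≠ 0 := sub_ne_zero.mpr hs₁
    rw [geom_sum_eq hs₁, hsub, inv_pow]
    field_simp
    ring
  induction r with
  | zero => simp
  | succ r ih =>
    rw [Finset.prod_range_succ, ih, hgeom, Finset.prod_range_succ, Nat.choose_succ_succ' r 1,
      Nat.choose_one_right, pow_add s r]
    ring

theorem prod_zpow_add_two_mul {K : Type*} [Field K] {s : K} (hs : s ≠ 0) (a : ℤ) (r : ℕ) :
    ∏ l ∈ Finset.range r, s ^ (a + 2 * l) = s ^ (r * (a + r - 1)) := by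
  induction r with
  | zero => simp
  | succ r ih =>
    rw [Finset.prod_range_succ, ih, ← zpow_add₀ hs]
    congr 1
    push_cast
    ring

theorem qq_ne_zero : qq ≠ 0 := RatFunc.X_ne_zero

theorem qq_pow_ne_one {n : ℕ} (hn : n ≠ 0) : qq ^ n ≠ 1 := by
  rw [qq, ← RatFunc.algebraMap_X, ← map_pow, ← map_one (algebraMap ℚ[X] (RatFunc ℚ)),
    (RatFunc.algebraMap_injective ℚ).ne_iff]
  intro h
  simpa [hn] using congr_arg Polynomial.natDegree h

theorem qfact_ne_zero (r : ℕ) : qfact r ≠ 0 := by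
  have hsub {n : ℕ} (hn : n ≠ 0) : qq ^ n - qq⁻¹ ^ n ≠ 0 := by
    rw [sub_ne_zero, inv_pow, ne_eq, ← mul_eq_one_iff_eq_inv₀ (pow_ne_zero n qq_ne_zero), ← pow_add]
    exact qq_pow_ne_one (by omega)
  exact Finset.prod_ne_zero_iff.mpr fun l _ ↦
    div_ne_zero (hsub l.succ_ne_zero) (by simpa using hsub one_ne_zero)

theorem prod_geom_sum_qq_sq (r : ℕ) :
    ∏ l ∈ Finset.range r, ∑ j ∈ Finset.range (l + 1), (qq ^ 2) ^ j =
      qq ^ r.choose 2 * qfact r :=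
  prod_geom_sum_sq qq_ne_zero (qq_pow_ne_one two_ne_zero) r

theorem prod_geom_sum_qq_inv_sq (r : ℕ) :
    ∏ l ∈ Finset.range r, ∑ j ∈ Finset.range (l + 1), (qq⁻¹ ^ 2) ^ j =
      qq⁻¹ ^ r.choose 2 * qfact r := by
  have hne : qq⁻¹ ^ 2 ≠ 1 := by simpa using qq_pow_ne_one two_ne_zero
  rw [prod_geom_sum_sq (inv_ne_zero qq_ne_zero) hne, inv_inv, qfact]
  simp_rw [← neg_sub qq, ← neg_sub (qq ^ _), neg_div_neg_eq]

end QuantumIntegers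

section DividedPowers

theorem divpow_single_one {c d : ℕ → Fq} {t : Fq}
    (hcd : ∀ n, c (n + 1) * d (n + 1) = -(1 + t ^ (n + 1))) {f : W → W} {M : ℕ → ℤ} {y : ℕ → Fq}
    {b : ℤ} (hf : ∀ (k : ℕ) P, f (Finsupp.single (M k) P) =
      Finsupp.single (M (k + 1)) (y k • vertexOp (shiftHom d) (genZ c) (b - 2 * k) P))
    {r : ℕ} (hr : (r : ℤ) = b + 1) {z : Fq}
    (hz : ∏ l ∈ Finset.range r, y l * ∑ j ∈ Finset.range (l + 1), t ^ j = z * qfact r) (x : Fq) :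
    divpow f r (x • Finsupp.single (M 0) 1) =
      (x * ((-1) ^ r.choose 2 * z)) • Finsupp.single (M r) 1 := by
  have hindex : b + 2 - 2 * r = 1 - r := by omega
  have hsign : ((-1) ^ r.choose 2 : LamF) = ((-1) ^ r.choose 2 : Fq) • 1 := by
    rw [Algebra.smul_def, mul_one, map_pow, map_neg, map_one]
  rw [divpow, iterate_single_one hcd hf, hz, hindex,
    det_hankel_one_sub (genZ_zero c) fun _ ↦ genZ_of_neg c, hsign, Finsupp.smul_single,
    Finsupp.smul_single, smul_smul, smul_smul]
  congr 2
  have := qfact_ne_zero r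
  field_simp

theorem divpow_chf1 {i M : ℤ} {r : ℕ} (hr : (r : ℤ) = 2 * M + i) (x : Fq) :
    divpow (chf1 i) r (x • Finsupp.single M 1) =
      (x * ((-1) ^ r.choose 2 * qq ^ r.choose 2)) • Finsupp.single (M - r) 1 := by
  have hcd (n : ℕ) : -(1 + qq ^ (2 * (n + 1))) * 1 = -(1 + (qq ^ 2) ^ (n + 1)) := by
    rw [mul_one, pow_mul]
  have hf (k : ℕ) (P : LamF) : chf1 i (Finsupp.single (M - k) P) =
      Finsupp.single (M - (k + 1 : ℕ)) ((1 : Fq) • vertexOp (shiftHom fun _ ↦ 1)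
        (genZ fun n ↦ -(1 + qq ^ (2 * n))) (2 * M + i - 1 - 2 * k) P) := by
    have hindex : 2 * (M - k) + i - 1 = 2 * M + i - 1 - 2 * k := by ring
    rw [chf1_single, one_smul, Nat.cast_succ, ← sub_sub, hindex]
  simpa only [Nat.cast_zero, sub_zero] using
    divpow_single_one hcd (M := fun k ↦ M - k) hf (by omega)
      (by simp only [one_mul, prod_geom_sum_qq_sq]) x

theorem divpow_chf0 {i M : ℤ} {r : ℕ} (hr : (r : ℤ) = 1 - 2 * M - i) (x : Fq) :
    divpow (chf0 i) r (x • Finsupp.single M 1) =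
      (x * ((-1) ^ r.choose 2 * qq ^ (2 * r - r.choose 2 : ℤ))) • Finsupp.single (M + r) 1 := by
  have hcd (n : ℕ) : (1 + qq ^ (2 * (n + 1))) * qq⁻¹ ^ (n + 1) * -qq⁻¹ ^ (n + 1) =
      -(1 + (qq⁻¹ ^ 2) ^ (n + 1)) := by
    have hinv : qq ^ (2 * (n + 1)) * (qq⁻¹ ^ 2) ^ (n + 1) = 1 := by
      rw [← pow_mul, ← mul_pow, mul_inv_cancel₀ qq_ne_zero, one_pow]
    linear_combination -hinv
  have hf (k : ℕ) (P : LamF) : chf0 i (Finsupp.single (M + k) P) =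
      Finsupp.single (M + (k + 1 : ℕ)) (qq ^ (2 * M + i + 2 + 2 * k) •
        vertexOp (shiftHom fun n ↦ -qq⁻¹ ^ n) (genZ fun n ↦ (1 + qq ^ (2 * n)) * qq⁻¹ ^ n)
          (-(2 * M) - i - 2 * k) P) := by
    have hindex : -(2 * (M + k)) - i = -(2 * M) - i - 2 * k := by ring
    have hexp : 2 * (M + k + 1) + i = 2 * M + i + 2 + 2 * k := by ring
    rw [chf0_single, Nat.cast_succ, ← add_assoc, hindex, hexp]
  have hz : ∏ l ∈ Finset.range r, qq ^ (2 * M + i + 2 + 2 * l) *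
      ∑ j ∈ Finset.range (l + 1), (qq⁻¹ ^ 2) ^ j = qq ^ (2 * r - r.choose 2 : ℤ) * qfact r := by
    have hexp : (r : ℤ) * (2 * M + i + 2 + r - 1) = 2 * r := by
      linear_combination (r : ℤ) * hr
    rw [Finset.prod_mul_distrib, prod_zpow_add_two_mul qq_ne_zero, hexp, prod_geom_sum_qq_inv_sq,
      zpow_sub₀ qq_ne_zero, zpow_natCast, inv_pow, ← mul_assoc, div_eq_mul_inv]
  simpa only [Nat.cast_zero, add_zero] using
    divpow_single_one hcd (M := fun k ↦ M + k) hf (by omega) hz x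

end DividedPowers

section Chains

theorem choose_two_odd (m : ℕ) : (2 * m + 1).choose 2 = m * (2 * m + 1) := by
  rw [Nat.choose_two_right, Nat.add_sub_cancel, mul_left_comm,
    Nat.mul_div_cancel_left _ two_pos, mul_comm]

theorem choose_two_even (m : ℕ) : (2 * m + 2).choose 2 = (m + 1) * (2 * m + 1) := by
  rw [Nat.choose_two_right, ← mul_add_one, mul_assoc, Nat.mul_div_cancel_left _ two_pos]
  rfl

theorem neg_one_pow_mul_odd {R : Type*} [Ring R] (a m : ℕ) :
    (-1 : R) ^ (a * (2 * m + 1)) = (-1) ^ a := by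
  rw [mul_comm, pow_mul, Odd.neg_one_pow ⟨m, rfl⟩]

theorem neg_one_pow_mul_self {R : Type*} [Ring R] (m : ℕ) : (-1 : R) ^ m * (-1) ^ m = 1 := by
  rw [← pow_add, Even.neg_one_pow ⟨m, rfl⟩]

theorem chainW0_odd_of_even {m : ℕ} (h : chainW0 (2 * m) =
      ((-1) ^ m * qq ^ (3 * (m : ℤ) ^ 2)) • Finsupp.single (-m : ℤ) 1) :
    chainW0 (2 * m + 1) = qq ^ ((m + 1 : ℤ) * (m + 2)) • Finsupp.single (m + 1 : ℤ) 1 := by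
  have hpos : -(m : ℤ) + (2 * m + 1 : ℕ) = m + 1 := by push_cast; ring
  rw [chainW0, if_neg (by omega), h, divpow_chf0 (by push_cast; ring), choose_two_odd,
    neg_one_pow_mul_odd, mul_mul_mul_comm, neg_one_pow_mul_self, one_mul, ← zpow_add₀ qq_ne_zero,
    hpos]
  congr 2
  push_cast
  ring

theorem chainW0_even (m : ℕ) : chainW0 (2 * m) =
    ((-1) ^ m * qq ^ (3 * (m : ℤ) ^ 2)) • Finsupp.single (-m : ℤ) 1 := by
  induction m with
  | zero => simp [chainW0]
  | succ m ih =>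
    have hpos : (m + 1 : ℤ) - (2 * m + 2 : ℕ) = -(m + 1 : ℕ) := by push_cast; ring
    rw [mul_add_one, chainW0, if_pos (by omega), chainW0_odd_of_even ih,
      divpow_chf1 (by push_cast; ring), choose_two_even, neg_one_pow_mul_odd, mul_left_comm,
      ← zpow_natCast qq, ← zpow_add₀ qq_ne_zero, hpos]
    congr 3
    push_cast
    ring

theorem chainW1_odd_of_even {m : ℕ} (h : chainW1 (2 * m) =
      ((-1) ^ m * qq ^ ((m : ℤ) * (m + 2))) • Finsupp.single (m : ℤ) 1) :
    chainW1 (2 * m + 1) = qq ^ (3 * (m : ℤ) * (m + 1)) • Finsupp.single (-(m + 1) : ℤ) 1 := by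
  have hpos : (m : ℤ) - (2 * m + 1 : ℕ) = -(m + 1) := by push_cast; ring
  rw [chainW1, if_neg (by omega), h, divpow_chf1 (by push_cast; ring), choose_two_odd,
    neg_one_pow_mul_odd, mul_mul_mul_comm, neg_one_pow_mul_self, one_mul, ← zpow_natCast qq,
    ← zpow_add₀ qq_ne_zero, hpos]
  congr 2
  push_cast
  ring

theorem chainW1_even (m : ℕ) : chainW1 (2 * m) =
    ((-1) ^ m * qq ^ ((m : ℤ) * (m + 2))) • Finsupp.single (m : ℤ) 1 := by
  induction m with
  | zero => simp [chainW1]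
  | succ m ih =>
    have hpos : -(m + 1 : ℤ) + (2 * m + 2 : ℕ) = (m + 1 : ℕ) := by push_cast; ring
    rw [mul_add_one, chainW1, if_pos (by omega), chainW1_odd_of_even ih,
      divpow_chf0 (by push_cast; ring), choose_two_even, neg_one_pow_mul_odd, mul_left_comm,
      ← zpow_add₀ qq_ne_zero, hpos]
    congr 3
    push_cast
    ring

end Chains

/-- highest-weight-vector monomials in divided powers of `f₀, f₁`:
(1) in `W₀`: for `m ≥ 1`, `f₁^{(2m)} f₀^{(2m−1)} ⋯ f₁^{(2)} f₀^{(1)} (1⊗e^{0α}) = (−1)^m q^{3m²} e^{−mα}`,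
    and for `m ≥ 0`, `f₀^{(2m+1)} f₁^{(2m)} ⋯ f₁^{(2)} f₀^{(1)} (1⊗e^{0α}) = q^{(m+1)(m+2)} e^{(m+1)α}`;
(2) in `W₁`: for `m ≥ 1`, `f₀^{(2m)} f₁^{(2m−1)} ⋯ f₀^{(2)} f₁^{(1)} (1⊗e^{0α}e^{α/2}) = (−1)^m q^{m(m+2)} e^{mα}e^{α/2}`,
    and for `m ≥ 0`, `f₁^{(2m+1)} f₀^{(2m)} ⋯ f₀^{(2)} f₁^{(1)} (1⊗e^{0α}e^{α/2}) = q^{3m(m+1)} e^{−(m+1)α}e^{α/2}`. -/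
theorem highest_weight_monomials (m : ℕ) :
    (1 ≤ m → chainW0 (2*m)
      = ((-1 : Fq)) ^ m • qq ^ (3 * (m : ℤ)^2) • Finsupp.single (-(m : ℤ)) (1 : LamF)) ∧
    (chainW0 (2*m+1)
      = qq ^ (((m : ℤ) + 1) * ((m : ℤ) + 2)) • Finsupp.single ((m : ℤ) + 1) (1 : LamF)) ∧
    (1 ≤ m → chainW1 (2*m)
      = ((-1 : Fq)) ^ m • qq ^ ((m : ℤ) * ((m : ℤ) + 2)) • Finsupp.single ((m : ℤ)) (1 : LamF)) ∧
    (chainW1 (2*m+1)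
      = qq ^ (3 * (m : ℤ) * ((m : ℤ) + 1)) • Finsupp.single (-((m : ℤ) + 1)) (1 : LamF)) := by
  simp only [smul_smul]
  exact ⟨fun _ ↦ chainW0_even m, chainW0_odd_of_even (chainW0_even m),
    fun _ ↦ chainW1_even m, chainW1_odd_of_even (chainW1_even m)⟩
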